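/- Let n ≥ 2 and let S ⊆ so(n,ℂ) be Ad-invariant, i.e. gXg⁻¹ ∈ S for every X ∈ S and every g ∈ SO(n,ℂ). Let h ∈ ℝ, let R : so(n) → so(n) be selfadjoint with R ∈ C(S,h), and let v ∈ S satisfy R(v,v̄) = h. Then (R∘R)(v,v̄) + R^#(v,v̄) ≥ 0, where (R∘R) and R^# are evaluated via the ℂ-bilinear extensions of their associated bilinear forms. -/

import Mathlib

/-!
The proof is Wilking's. Write `v = a + ib`. Since `R` is real and selfadjoint, `(R∘R)(v,v̄)` equals
`|R a|² + |R b|² ≥ 0`, so the point is that `R^#(v,v̄) = -(1/2) tr(ad_v R ad_v̄ R)` is nonnegative.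

Second variation (`second_variation`, `nonneg_on_range_ad`): `v` minimizes `w ↦ R(w,w̄)` on its orbit
under `SO(n,ℂ)`. For complex skew `x`, differentiating twice at `v` along a curve in the orbit with
velocity proportional to `[x,v]` gives
`R([x,v], conj [x,v]) + Re R(v, conj [x,[x,v]]) ≥ 0`. Replacing `x` by `ix` changes the sign of the
second term only, so adding the two inequalities yields `R([x,v], conj [x,v]) ≥ 0` for all `x`:
`R` is nonnegative on the image of `ad_v`, hence, being real, also on the image of `ad_v̄`. The curve
used is the Cayley transform `(1 - tx)⁻¹(1 + tx)` acting by conjugation: its expansion to second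
order with continuous remainder is an algebraic identity.

Trace inequality (`trace_conj_mul_nonneg`, `sharpForm_add_nonneg`): if `r` is a symmetric matrix
that is nonnegative on the images of `V` and `Vᵀ`, then `M = V r Vᵀ` is positive semidefinite, and
its eigenvectors with nonzero eigenvalue lie in the image of `V`, so that
`tr(M r) = ∑ λᵢ ⟨eᵢ, r eᵢ⟩ ≥ 0`. It is applied to the real `2 × 2` block form of the complex
operator `ad_v`, in an orthonormal basis of `so(n)`; there `(ad_v)ᵀ` is the block form
of `-ad_v̄`.
-/

open Matrix

noncomputable section

/-- The real Lie algebra `so(n)` of skew-symmetric real `n × n` matrices, as a submodule of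
the space of all real `n × n` matrices. -/
def soM (n : ℕ) : Submodule ℝ (Matrix (Fin n) (Fin n) ℝ) where
  carrier := {A | Aᵀ = -A}
  add_mem' := by
    intro a b ha hb
    simp only [Set.mem_setOf_eq] at *
    rw [Matrix.transpose_add, ha, hb, neg_add]
  zero_mem' := by simp
  smul_mem' := by
    intro c a ha
    simp only [Set.mem_setOf_eq] at *
    rw [Matrix.transpose_smul, ha, smul_neg]

variable {n : ℕ}

/-- The invariant inner product `⟨A,B⟩ = -(1/2)·tr(AB)` on `so(n)`. -/
def soInner (A B : soM n) : ℝ :=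
  -(1/2) * ((A : Matrix (Fin n) (Fin n) ℝ) * (B : Matrix (Fin n) (Fin n) ℝ)).trace

/-- Selfadjointness with respect to `soInner`. -/
def IsSA (R : soM n →ₗ[ℝ] soM n) : Prop :=
  ∀ A B : soM n, soInner (R A) B = soInner A (R B)

/-- The skew-symmetric part of a real matrix, as an element of `so(n)`;
on skew-symmetric matrices this is the identity. -/
def skewPart (A : Matrix (Fin n) (Fin n) ℝ) : soM n :=
  ⟨(1/2 : ℝ) • (A - Aᵀ), by
    show ((1/2 : ℝ) • (A - Aᵀ))ᵀ = -((1/2 : ℝ) • (A - Aᵀ))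
    rw [Matrix.transpose_smul, Matrix.transpose_sub, Matrix.transpose_transpose, ← smul_neg,
      neg_sub]⟩

/-- The real part of an element of `so(n,ℂ)`, as an element of `so(n)`. -/
def reSk (v : Matrix (Fin n) (Fin n) ℂ) : soM n := skewPart (v.map Complex.re)

/-- The imaginary part of an element of `so(n,ℂ)`, as an element of `so(n)`. -/
def imSk (v : Matrix (Fin n) (Fin n) ℂ) : soM n := skewPart (v.map Complex.im)

/-- Entrywise complex conjugation `X ↦ X̄` on `so(n,ℂ)`. -/
def conjM (v : Matrix (Fin n) (Fin n) ℂ) : Matrix (Fin n) (Fin n) ℂ := v.map (starRingEnd ℂ)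

/-- The unique `ℂ`-bilinear extension to `so(n,ℂ)` of a real bilinear form `B` on `so(n)`,
computed through real and imaginary parts. -/
def bilinC (B : soM n → soM n → ℝ) (v w : Matrix (Fin n) (Fin n) ℂ) : ℂ :=
  ((B (reSk v) (reSk w) - B (imSk v) (imSk w) : ℝ) : ℂ) +
    ((B (reSk v) (imSk w) + B (imSk v) (reSk w) : ℝ) : ℂ) * Complex.I

/-- The value `R(v,w)` of the `ℂ`-bilinear extension of `(A,B) ↦ ⟨R A, B⟩` to `so(n,ℂ)`. -/
def qC (R : soM n →ₗ[ℝ] soM n) (v w : Matrix (Fin n) (Fin n) ℂ) : ℂ :=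
  bilinC (fun a b => soInner (R a) b) v w

open ComplexOrder in
/-- The set `C(S,h)` of selfadjoint endomorphisms `R` of `so(n)` with `R(v,v̄) ≥ h`
for all `v ∈ S`. -/
def CSet (S : Set (Matrix (Fin n) (Fin n) ℂ)) (h : ℝ) : Set (soM n →ₗ[ℝ] soM n) :=
  {R | IsSA R ∧ ∀ v ∈ S, (h : ℂ) ≤ qC R v (conjM v)}

/-- `ad_x : so(n) → so(n)`, `z ↦ xz - zx`. -/
def adM (x : soM n) : soM n →ₗ[ℝ] soM n where
  toFun z := ⟨(x : Matrix (Fin n) (Fin n) ℝ) * (z : Matrix (Fin n) (Fin n) ℝ)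
      - (z : Matrix (Fin n) (Fin n) ℝ) * (x : Matrix (Fin n) (Fin n) ℝ), by
    have hx : (x : Matrix (Fin n) (Fin n) ℝ)ᵀ = -(x : Matrix (Fin n) (Fin n) ℝ) := x.2
    have hz : (z : Matrix (Fin n) (Fin n) ℝ)ᵀ = -(z : Matrix (Fin n) (Fin n) ℝ) := z.2
    show ((x : Matrix (Fin n) (Fin n) ℝ) * (z : Matrix (Fin n) (Fin n) ℝ)
      - (z : Matrix (Fin n) (Fin n) ℝ) * (x : Matrix (Fin n) (Fin n) ℝ))ᵀ = _
    rw [Matrix.transpose_sub, Matrix.transpose_mul, Matrix.transpose_mul, hx, hz]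
    simp only [Matrix.neg_mul, Matrix.mul_neg, neg_neg, neg_sub]⟩
  map_add' a b := by
    apply Subtype.ext
    simp only [Submodule.coe_add, Matrix.mul_add, Matrix.add_mul]
    abel
  map_smul' c a := by
    apply Subtype.ext
    simp only [SetLike.val_smul, RingHom.id_apply, Matrix.mul_smul, Matrix.smul_mul, smul_sub]

/-- The bilinear form of `R^#`:
`⟨R^# x, y⟩ = -(1/2)·tr(ad_x ∘ R ∘ ad_y ∘ R)`, the trace being that of an
endomorphism of the vector space `so(n)`. -/
def sharpForm (R : soM n →ₗ[ℝ] soM n) (x y : soM n) : ℝ :=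
  -(1/2) * LinearMap.trace ℝ (soM n) (adM x ∘ₗ R ∘ₗ adM y ∘ₗ R)

/-! ### A trace inequality -/

/-- Trace inequality: a symmetric `r` that is nonnegative on the images of `V` and of `Vᵀ` satisfies
`tr(V r Vᵀ r) ≥ 0`, although `r` itself need not be positive semidefinite. -/
theorem trace_conj_mul_nonneg {ι : Type*} [Fintype ι] (V r : Matrix ι ι ℝ) (hr : rᵀ = r)
    (h1 : ∀ z, 0 ≤ (V *ᵥ z) ⬝ᵥ r *ᵥ (V *ᵥ z))
    (h2 : ∀ z, 0 ≤ (Vᵀ *ᵥ z) ⬝ᵥ r *ᵥ (Vᵀ *ᵥ z)) :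
    0 ≤ (V * r * Vᵀ * r).trace := by
  classical
  have hM : (V * r * Vᵀ).IsHermitian := by
    rw [Matrix.IsHermitian, conjTranspose_eq_transpose_of_trivial]
    simp [Matrix.transpose_mul, hr, Matrix.mul_assoc]
  have hspec := hM.spectral_theorem
  set U : Matrix ι ι ℝ := (hM.eigenvectorUnitary : Matrix ι ι ℝ) with hU
  have htr : (V * r * Vᵀ * r).trace = ∑ i, hM.eigenvalues i * (star U * r * U) i i := by
    have : V * r * Vᵀ * r = U * (diagonal hM.eigenvalues * (star U * r)) := by
      conv_lhs => rw [hspec, Unitary.conjStarAlgAut_apply]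
      simp only [Matrix.mul_assoc, hU]
      rfl
    rw [this, Matrix.trace_mul_comm, Matrix.mul_assoc, Matrix.trace]
    simp [Matrix.diagonal_mul]
  rw [htr]
  refine Finset.sum_nonneg fun i _ => ?_
  set e : ι → ℝ := ⇑(hM.eigenvectorBasis i) with he
  have hev := hM.mulVec_eigenvectorBasis i
  have hdiag : (star U * r * U) i i = e ⬝ᵥ r *ᵥ e := by
    have hUe : ∀ j, U j i = e j := fun j => hM.eigenvectorUnitary_apply j i
    rw [Matrix.mul_assoc, Matrix.mul_apply, dotProduct]
    refine Finset.sum_congr rfl fun j _ => ?_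
    simp [Matrix.star_apply, hUe, Matrix.mul_apply, mulVec, dotProduct]
  have hlam : 0 ≤ hM.eigenvalues i := by
    rw [hM.eigenvalues_eq i]
    have := h2 e
    simpa [he, ← Matrix.mulVec_mulVec, Matrix.dotProduct_mulVec, Matrix.vecMul_transpose,
      Matrix.mulVec_transpose, Matrix.vecMul_vecMul, Matrix.mul_assoc] using this
  rw [hdiag]
  rcases hlam.eq_or_lt with h0 | hpos
  · rw [← h0, zero_mul]
  · refine mul_nonneg hlam ?_
    -- an eigenvector of `V r Vᵀ` with nonzero eigenvalue lies in the image of `V`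
    have hVe : V *ᵥ ((hM.eigenvalues i)⁻¹ • (r *ᵥ (Vᵀ *ᵥ e))) = e := by
      rw [Matrix.mulVec_smul, Matrix.mulVec_mulVec, Matrix.mulVec_mulVec, hev, smul_smul,
        inv_mul_cancel₀ hpos.ne', one_smul]
    have := h1 ((hM.eigenvalues i)⁻¹ • (r *ᵥ (Vᵀ *ᵥ e)))
    rwa [hVe] at this


/-- `trace_conj_mul_nonneg` for the complex matrix `A + iB` with `A`, `B` real and skew-symmetric, in
its real `2 × 2` block form. One hypothesis suffices because `(A + iB)ᴴ` is minus the complex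
conjugate of `A + iB`. -/
theorem trace_add_trace_nonpos {ι : Type*} [Fintype ι] (A B r : Matrix ι ι ℝ)
    (hA : Aᵀ = -A) (hB : Bᵀ = -B) (hr : rᵀ = r)
    (h : ∀ x y : ι → ℝ, 0 ≤ (A *ᵥ x - B *ᵥ y) ⬝ᵥ r *ᵥ (A *ᵥ x - B *ᵥ y)
      + (A *ᵥ y + B *ᵥ x) ⬝ᵥ r *ᵥ (A *ᵥ y + B *ᵥ x)) :
    (A * r * A * r).trace + (B * r * B * r).trace ≤ 0 := by
  have htr : ∀ P Q R S : Matrix ι ι ℝ, (fromBlocks P Q R S).trace = P.trace + S.trace := by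
    intro P Q R S
    simp [Matrix.trace]
  have hdot : ∀ p q : ι → ℝ, Sum.elim p q ⬝ᵥ fromBlocks r 0 0 r *ᵥ Sum.elim p q =
      p ⬝ᵥ r *ᵥ p + q ⬝ᵥ r *ᵥ q := by
    intro p q
    simp [fromBlocks_mulVec]
  have key := trace_conj_mul_nonneg (fromBlocks A (-B) B A) (fromBlocks r 0 0 r)
    (by simp [fromBlocks_transpose, hr]) ?_ ?_
  · simp only [fromBlocks_transpose, fromBlocks_multiply, hA, hB,
      Matrix.transpose_neg] at key
    simp only [Matrix.mul_zero, add_zero, zero_add, Matrix.mul_neg, Matrix.neg_mul, neg_neg,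
      Matrix.add_mul, Matrix.trace_add, Matrix.trace_neg, htr] at key
    linarith
  · intro z
    have := h (z ∘ Sum.inl) (z ∘ Sum.inr)
    rw [fromBlocks_mulVec, hdot]
    rwa [Matrix.neg_mulVec, ← sub_eq_add_neg, add_comm (B *ᵥ _)]
  · intro z
    -- conjugation symmetry: the sign change in the imaginary part exchanges the two images
    have := h (z ∘ Sum.inl) (-(z ∘ Sum.inr))
    rw [fromBlocks_transpose, fromBlocks_mulVec, hdot, hA, hB, Matrix.transpose_neg, hB]
    convert this using 2
    · have : (-A) *ᵥ (z ∘ Sum.inl) + (-B) *ᵥ (z ∘ Sum.inr) =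
          -(A *ᵥ (z ∘ Sum.inl) - B *ᵥ (-(z ∘ Sum.inr))) := by
        simp only [Matrix.neg_mulVec, Matrix.mulVec_neg]; abel
      rw [this]
      generalize A *ᵥ (z ∘ Sum.inl) - B *ᵥ (-(z ∘ Sum.inr)) = t
      rw [Matrix.mulVec_neg, neg_dotProduct_neg]
    · have : (- -B) *ᵥ (z ∘ Sum.inl) + (-A) *ᵥ (z ∘ Sum.inr) =
          A *ᵥ (-(z ∘ Sum.inr)) + B *ᵥ (z ∘ Sum.inl) := by
        simp only [Matrix.neg_mulVec, Matrix.mulVec_neg, neg_neg]; abel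
      rw [this]

/-! ### The Euclidean space `so(n)` -/

theorem soInner_apply (A B : soM n) : soInner A B = (1/2) * ∑ i, ∑ j, A.1 i j * B.1 i j := by
  have hB : ∀ i j, B.1 j i = - B.1 i j := fun i j => congrFun (congrFun B.2 i) j
  have : (A.1 * B.1).trace = -∑ i, ∑ j, A.1 i j * B.1 i j := by
    rw [Matrix.trace, ← Finset.sum_neg_distrib]
    refine Finset.sum_congr rfl fun i _ => ?_
    rw [Matrix.diag_apply, Matrix.mul_apply, ← Finset.sum_neg_distrib]
    exact Finset.sum_congr rfl fun j _ => by rw [hB i j, mul_neg]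
  rw [soInner, this]
  ring

theorem soInner_comm (A B : soM n) : soInner A B = soInner B A := by
  simp only [soInner, Matrix.trace_mul_comm A.1 B.1]

theorem soInner_add_left (A B C : soM n) : soInner (A + B) C = soInner A C + soInner B C := by
  simp only [soInner, Submodule.coe_add, Matrix.add_mul, Matrix.trace_add]; ring

theorem soInner_smul_left (c : ℝ) (A B : soM n) : soInner (c • A) B = c * soInner A B := by
  simp only [soInner, Submodule.coe_smul, Matrix.smul_mul, Matrix.trace_smul, smul_eq_mul]; ring

theorem soInner_add_right (A B C : soM n) : soInner A (B + C) = soInner A B + soInner A C := by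
  rw [soInner_comm, soInner_add_left, soInner_comm B, soInner_comm C]

theorem soInner_smul_right (c : ℝ) (A B : soM n) : soInner A (c • B) = c * soInner A B := by
  rw [soInner_comm, soInner_smul_left, soInner_comm]

theorem soInner_self_nonneg (A : soM n) : 0 ≤ soInner A A := by
  rw [soInner_apply]
  exact mul_nonneg (by norm_num)
    (Finset.sum_nonneg fun i _ => Finset.sum_nonneg fun j _ => mul_self_nonneg _)

theorem soInner_self_eq_zero (A : soM n) (h : soInner A A = 0) : A = 0 := by
  rw [soInner_apply] at h
  have h' : ∑ i, ∑ j, A.1 i j * A.1 i j = 0 := by linarith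
  apply Subtype.ext
  ext i j
  have h2 := (Finset.sum_eq_zero_iff_of_nonneg
    (fun i _ => Finset.sum_nonneg fun j _ => mul_self_nonneg (A.1 i j))).mp h' i (Finset.mem_univ _)
  have h3 := (Finset.sum_eq_zero_iff_of_nonneg
    (fun j _ => mul_self_nonneg (A.1 i j))).mp h2 j (Finset.mem_univ _)
  exact mul_self_eq_zero.mp h3

/-- The Euclidean structure of `so(n)` given by `soInner`; it is only used to obtain an orthonormal
basis. -/
abbrev soCore (n : ℕ) : InnerProductSpace.Core ℝ (soM n) where
  inner A B := soInner A B
  conj_inner_symm A B := by simpa using soInner_comm B A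
  re_inner_nonneg A := by simpa using soInner_self_nonneg A
  add_left := soInner_add_left
  smul_left A B c := by simpa using soInner_smul_left c A B
  definite := soInner_self_eq_zero

/-- An orthonormal basis of `so(n)`, with orthonormality expressed by the formula for coordinates. -/
theorem exists_soM_basis (n : ℕ) : ∃ (m : ℕ) (b : Module.Basis (Fin m) ℝ (soM n)),
    ∀ x i, b.repr x i = soInner (b i) x := by
  let _ : NormedAddCommGroup (soM n) :=
    @InnerProductSpace.Core.toNormedAddCommGroup ℝ (soM n) _ _ _ (soCore n)
  let _ : InnerProductSpace ℝ (soM n) := InnerProductSpace.ofCore (soCore n).toCore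
  let b := stdOrthonormalBasis ℝ (soM n)
  refine ⟨_, b.toBasis, fun x i => ?_⟩
  rw [OrthonormalBasis.coe_toBasis_repr_apply, OrthonormalBasis.repr_apply_apply,
    OrthonormalBasis.coe_toBasis]
  rfl

/-- Invariance of the inner product: `ad_a` is skew-adjoint. -/
theorem soInner_adM (a x y : soM n) : soInner (adM a x) y = - soInner x (adM a y) := by
  simp only [soInner, adM, LinearMap.coe_mk, AddHom.coe_mk, Matrix.sub_mul, Matrix.mul_sub,
    Matrix.trace_sub]
  rw [Matrix.mul_assoc, Matrix.trace_mul_comm a.1, Matrix.mul_assoc, Matrix.mul_assoc]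
  ring

/-- For `v = a + ib` the hypothesis says that `R(w,w̄) ≥ 0` for every `w = [v, x + iy]`, and the
conclusion that `R^#(v,v̄) ≥ 0`. -/
theorem sharpForm_add_nonneg (R : soM n →ₗ[ℝ] soM n) (hR : IsSA R) (a b : soM n)
    (h : ∀ x y, 0 ≤ soInner (R (adM a x - adM b y)) (adM a x - adM b y)
      + soInner (R (adM a y + adM b x)) (adM a y + adM b x)) :
    0 ≤ sharpForm R a a + sharpForm R b b := by
  obtain ⟨m, e, he⟩ := exists_soM_basis n
  have hmat : ∀ (f : soM n →ₗ[ℝ] soM n) i j, LinearMap.toMatrix e e f i j = soInner (e i) (f (e j)) :=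
    fun f i j => by rw [LinearMap.toMatrix_apply, he]
  have hskew : ∀ c : soM n, (LinearMap.toMatrix e e (adM c))ᵀ = - LinearMap.toMatrix e e (adM c) := by
    intro c
    ext i j
    rw [Matrix.transpose_apply, Matrix.neg_apply, hmat, hmat, ← soInner_adM, soInner_comm]
  have hsymm : (LinearMap.toMatrix e e R)ᵀ = LinearMap.toMatrix e e R := by
    ext i j
    rw [Matrix.transpose_apply, hmat, hmat, ← hR, soInner_comm]
  have hdot : ∀ x y : soM n, (e.repr x : Fin m → ℝ) ⬝ᵥ (e.repr y : Fin m → ℝ) = soInner x y := by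
    intro x y
    have : ∀ z : soM n, soInner z y = ∑ i, e.repr z i * soInner (e i) y := by
      intro z
      have hl : IsLinearMap ℝ (fun z => soInner z y) :=
        ⟨fun p q => soInner_add_left p q y, fun c p => soInner_smul_left c p y⟩
      have h2 := map_sum hl.mk' (fun i => e.repr z i • e i) Finset.univ
      rw [e.sum_repr] at h2
      simpa [IsLinearMap.mk'_apply, soInner_smul_left] using h2
    rw [this x, dotProduct]
    simp only [he y]
  have key := trace_add_trace_nonpos (LinearMap.toMatrix e e (adM a)) (LinearMap.toMatrix e e (adM b))
    (LinearMap.toMatrix e e R) (hskew a) (hskew b) hsymm ?_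
  · have htr : ∀ c : soM n, sharpForm R c c = -(1/2) * (LinearMap.toMatrix e e (adM c) *
        LinearMap.toMatrix e e R * LinearMap.toMatrix e e (adM c) * LinearMap.toMatrix e e R).trace := by
      intro c
      rw [sharpForm, LinearMap.trace_eq_matrix_trace ℝ e, LinearMap.toMatrix_comp e e e,
        LinearMap.toMatrix_comp e e e, LinearMap.toMatrix_comp e e e]
      simp only [Matrix.mul_assoc]
    rw [htr, htr]
    linarith
  · intro x y
    obtain ⟨x, rfl⟩ : ∃ x' : soM n, (e.repr x' : Fin m → ℝ) = x := ⟨e.equivFun.symm x, by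
      exact e.equivFun.apply_symm_apply x⟩
    obtain ⟨y, rfl⟩ : ∃ x' : soM n, (e.repr x' : Fin m → ℝ) = y := ⟨e.equivFun.symm y, by
      exact e.equivFun.apply_symm_apply y⟩
    simp only [LinearMap.toMatrix_mulVec_repr, ← Finsupp.coe_sub, ← Finsupp.coe_add, ← map_sub,
      ← map_add, hdot]
    have := h x y
    rwa [soInner_comm, soInner_comm (R (adM a y + adM b x))] at this

/-! ### Second variation along Cayley curves -/

/-- Second-order necessary condition for a minimum at `0`, with the Taylor expansion
`t α + t² φ(t)` of the difference given explicitly. -/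
theorem second_order_test (φ : ℝ → ℝ) (hφ : ContinuousAt φ 0) (α : ℝ)
    (h : ∀ᶠ t in nhds (0 : ℝ), 0 ≤ t * α + t ^ 2 * φ t) : 0 ≤ φ 0 := by
  have hneg : Filter.Tendsto (fun t : ℝ => -t) (nhds 0) (nhds 0) := by
    simpa using (continuous_neg.tendsto (0 : ℝ))
  have hlim : Filter.Tendsto (fun t => φ t + φ (-t)) (nhdsWithin 0 {0}ᶜ) (nhds (φ 0 + φ 0)) :=
    (hφ.tendsto.add (hφ.tendsto.comp hneg)).mono_left nhdsWithin_le_nhds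
  have h2 : ∀ᶠ t in nhdsWithin (0 : ℝ) {0}ᶜ, 0 ≤ φ t + φ (-t) := by
    filter_upwards [nhdsWithin_le_nhds h, nhdsWithin_le_nhds (hneg.eventually h),
      self_mem_nhdsWithin] with t h1 h2 h3
    have ht : 0 < t ^ 2 := by have : t ≠ 0 := h3; positivity
    have : 0 ≤ t ^ 2 * (φ t + φ (-t)) := by nlinarith
    exact nonneg_of_mul_nonneg_right this ht
  have := ge_of_tendsto hlim h2
  linarith

/-- The Cayley transform `(1 - X)⁻¹(1 + X) = 2(1 - X)⁻¹ - 1` of a complex skew-symmetric `X` lies in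
`SO(n,ℂ)`. The last two identities give its expansion to second order in `X`. -/
theorem cayley_properties (X : Matrix (Fin n) (Fin n) ℂ) (hX : Xᵀ = -X) (hdet : IsUnit (1 - X).det) :
    (2 * (1 - X)⁻¹ - 1)ᵀ * (2 * (1 - X)⁻¹ - 1) = 1 ∧ (2 * (1 - X)⁻¹ - 1).det = 1 ∧
    (2 * (1 - X)⁻¹ - 1)⁻¹ = 2 * (1 + X)⁻¹ - 1 ∧
    (1 - X)⁻¹ = 1 + X + X * X * (1 - X)⁻¹ ∧ (1 + X)⁻¹ = 1 - X + X * X * (1 + X)⁻¹ := by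
  have hT : (1 - X)ᵀ = 1 + X := by rw [Matrix.transpose_sub, hX]; simp
  have hdet' : (1 + X).det = (1 - X).det := by rw [← hT, Matrix.det_transpose]
  have hdet2 : IsUnit (1 + X).det := hdet' ▸ hdet
  have hJT : ((1 - X)⁻¹)ᵀ = (1 + X)⁻¹ := by rw [Matrix.transpose_nonsing_inv, hT]
  have hJ := Matrix.mul_nonsing_inv _ hdet
  have hJ' := Matrix.nonsing_inv_mul _ hdet
  have hK := Matrix.mul_nonsing_inv _ hdet2
  have hK' := Matrix.nonsing_inv_mul _ hdet2
  set J := (1 - X)⁻¹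
  set K := (1 + X)⁻¹
  have e1 : (2 * J - 1)ᵀ = 2 * K - 1 := by
    rw [Matrix.transpose_sub, two_mul, Matrix.transpose_add, hJT, two_mul, Matrix.transpose_one]
  have e2 : (2 * K - 1) * (2 * J - 1) = 1 := by
    have : 2 * (K * J) = K + J := by
      calc 2 * (K * J) = K * ((1 - X) * J) + (K * (1 + X)) * J := by noncomm_ring
        _ = K + J := by rw [hJ, hK', mul_one, one_mul]
    calc (2 * K - 1) * (2 * J - 1) = 2 * (2 * (K * J)) - 2 * K - 2 * J + 1 := by noncomm_ring
      _ = 1 := by rw [this]; noncomm_ring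
  refine ⟨by rw [e1, e2], ?_, Matrix.inv_eq_left_inv e2, ?_, ?_⟩
  · have : 2 * J - 1 = J * (1 + X) := by
      calc 2 * J - 1 = 2 * J - J * (1 - X) := by rw [hJ']
        _ = J * (1 + X) := by noncomm_ring
    rw [this, Matrix.det_mul, hdet', ← Matrix.det_mul, hJ', Matrix.det_one]
  · calc J = (1 + X) * ((1 - X) * J) + X * X * J := by noncomm_ring
      _ = _ := by rw [hJ, mul_one]
  · calc K = (1 - X) * ((1 + X) * K) + X * X * K := by noncomm_ring
      _ = _ := by rw [hK, mul_one]

/-- The real bilinear form `Re R(u, w̄)` on complex matrices; only skew-symmetric parts matter. -/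
def hermForm (R : soM n →ₗ[ℝ] soM n) (u w : Matrix (Fin n) (Fin n) ℂ) : ℝ :=
  soInner (R (reSk u)) (reSk w) + soInner (R (imSk u)) (imSk w)

theorem reSk_add (u w : Matrix (Fin n) (Fin n) ℂ) : reSk (u + w) = reSk u + reSk w := by
  apply Subtype.ext; ext i j; simp [reSk, skewPart]; ring

theorem imSk_add (u w : Matrix (Fin n) (Fin n) ℂ) : imSk (u + w) = imSk u + imSk w := by
  apply Subtype.ext; ext i j; simp [imSk, skewPart]; ring

theorem reSk_smul (t : ℝ) (u : Matrix (Fin n) (Fin n) ℂ) : reSk (t • u) = t • reSk u := by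
  apply Subtype.ext; ext i j; simp [reSk, skewPart]; ring

theorem imSk_smul (t : ℝ) (u : Matrix (Fin n) (Fin n) ℂ) : imSk (t • u) = t • imSk u := by
  apply Subtype.ext; ext i j; simp [imSk, skewPart]; ring

theorem reSk_I_smul (u : Matrix (Fin n) (Fin n) ℂ) :
    reSk (Complex.I • u) = (-1 : ℝ) • imSk u := by
  apply Subtype.ext; ext i j; simp [reSk, imSk, skewPart]; ring

theorem imSk_I_smul (u : Matrix (Fin n) (Fin n) ℂ) : imSk (Complex.I • u) = reSk u := by
  apply Subtype.ext; ext i j; simp [reSk, imSk, skewPart]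

theorem reSk_conjM (u : Matrix (Fin n) (Fin n) ℂ) : reSk (conjM u) = reSk u := by
  apply Subtype.ext; ext i j; simp [reSk, conjM, skewPart]

theorem imSk_conjM (u : Matrix (Fin n) (Fin n) ℂ) : imSk (conjM u) = (-1 : ℝ) • imSk u := by
  apply Subtype.ext; ext i j; simp [imSk, conjM, skewPart]; ring

section
variable (R : soM n →ₗ[ℝ] soM n) (u w z : Matrix (Fin n) (Fin n) ℂ)

theorem hermForm_add_left : hermForm R (u + w) z = hermForm R u z + hermForm R w z := by
  simp only [hermForm, reSk_add, imSk_add, map_add, soInner_add_left]; ring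

theorem hermForm_add_right : hermForm R z (u + w) = hermForm R z u + hermForm R z w := by
  simp only [hermForm, reSk_add, imSk_add, soInner_add_right]; ring

theorem hermForm_smul_left (t : ℝ) : hermForm R (t • u) z = t * hermForm R u z := by
  simp only [hermForm, reSk_smul, imSk_smul, map_smul, soInner_smul_left]; ring

theorem hermForm_smul_right (t : ℝ) : hermForm R z (t • u) = t * hermForm R z u := by
  simp only [hermForm, reSk_smul, imSk_smul, soInner_smul_right]; ring

theorem hermForm_comm (hR : IsSA R) : hermForm R u w = hermForm R w u := by
  rw [hermForm, hermForm, hR, hR, soInner_comm, soInner_comm (imSk u)]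

theorem hermForm_I_smul : hermForm R (Complex.I • u) (Complex.I • u) = hermForm R u u := by
  simp only [hermForm, reSk_I_smul, imSk_I_smul, map_smul, soInner_smul_left, soInner_smul_right]
  ring

/-- For a symmetric form `B`, the value `B(u,ū)` of the complex bilinear extension is real. -/
theorem bilinC_conjM (B : soM n → soM n → ℝ)
    (hB : ∀ x y, B x y = B y x) (hB' : ∀ x y (c : ℝ), B x (c • y) = c * B x y) :
    bilinC B u (conjM u) = ((B (reSk u) (reSk u) + B (imSk u) (imSk u) : ℝ) : ℂ) := by
  rw [bilinC, reSk_conjM, imSk_conjM, hB', hB', hB (imSk u) (reSk u)]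
  have : (-1 * B (reSk u) (imSk u) + B (reSk u) (imSk u)) = 0 := by ring
  rw [this]
  push_cast
  ring

theorem qC_conjM (hR : IsSA R) : qC R u (conjM u) = (hermForm R u u : ℂ) := by
  rw [qC, bilinC_conjM]
  · rfl
  · intro x y; rw [hR, soInner_comm]
  · intro x y c; rw [soInner_smul_right]

end

theorem continuous_hermForm (R : soM n →ₗ[ℝ] soM n) :
    Continuous fun p : Matrix (Fin n) (Fin n) ℂ × Matrix (Fin n) (Fin n) ℂ =>
      hermForm R p.1 p.2 := by
  have hsk : Continuous (skewPart : Matrix (Fin n) (Fin n) ℝ → soM n) := by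
    refine Continuous.subtype_mk ?_ _
    fun_prop
  have hre : Continuous (reSk : Matrix (Fin n) (Fin n) ℂ → soM n) :=
    hsk.comp (continuous_id.matrix_map Complex.continuous_re)
  have him : Continuous (imSk : Matrix (Fin n) (Fin n) ℂ → soM n) :=
    hsk.comp (continuous_id.matrix_map Complex.continuous_im)
  have hRc : Continuous R := R.continuous_of_finiteDimensional
  have hin : ∀ f g : Matrix (Fin n) (Fin n) ℂ × Matrix (Fin n) (Fin n) ℂ → soM n,
      Continuous f → Continuous g → Continuous fun p => soInner (f p) (g p) := by
    intro f g hf hg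
    have h1 := (continuous_subtype_val.comp hf).matrix_mul (continuous_subtype_val.comp hg)
    exact h1.matrix_trace.const_mul _
  exact (hin _ _ (hRc.comp (hre.comp continuous_fst)) (hre.comp continuous_snd)).add
    (hin _ _ (hRc.comp (him.comp continuous_fst)) (him.comp continuous_snd))

/-- Second variation of `w ↦ R(w,w̄)` at a minimum `v` over its `SO(n,ℂ)`-orbit, in direction `x`; the
second argument of the last term is `[x,[x,v]]`. -/
theorem second_variation (R : soM n →ₗ[ℝ] soM n) (hR : IsSA R) (v : Matrix (Fin n) (Fin n) ℂ)
    (hmin : ∀ g : Matrix (Fin n) (Fin n) ℂ, gᵀ * g = 1 → g.det = 1 →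
      hermForm R v v ≤ hermForm R (g * v * g⁻¹) (g * v * g⁻¹))
    (x : Matrix (Fin n) (Fin n) ℂ) (hx : xᵀ = -x) :
    0 ≤ hermForm R (x * v - v * x) (x * v - v * x)
      + hermForm R v (x * x * v + v * x * x - (2 : ℝ) • (x * v * x)) := by
  have hinv : ∀ s : ℝ, ContinuousAt (fun t : ℝ => (1 + (t * s) • x)⁻¹) 0 := by
    intro s
    simp only [Matrix.inv_def, Ring.inverse_eq_inv']
    have hd : Continuous fun t : ℝ => (1 + (t * s) • x).det := Continuous.matrix_det (by fun_prop)
    refine ContinuousAt.smul (hd.continuousAt.inv₀ (by simp)) ?_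
    · exact Continuous.continuousAt (Continuous.matrix_adjugate (by fun_prop))
  have hJ : ContinuousAt (fun t : ℝ => (1 - t • x)⁻¹) 0 := by
    simpa [sub_eq_add_neg] using hinv (-1)
  have hK : ContinuousAt (fun t : ℝ => (1 + t • x)⁻¹) 0 := by
    simpa using hinv 1
  have hev : ∀ᶠ t : ℝ in nhds 0, IsUnit (1 - t • x).det := by
    have hc : Continuous fun t : ℝ => (1 - t • x).det := Continuous.matrix_det (by fun_prop)
    have h0 : (1 - (0 : ℝ) • x).det ≠ 0 := by simp
    have := hc.continuousAt.eventually_ne h0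
    filter_upwards [this] with t ht using isUnit_iff_ne_zero.mpr ht
  set J : ℝ → Matrix (Fin n) (Fin n) ℂ := fun t => (1 - t • x)⁻¹ with hJdef
  set K : ℝ → Matrix (Fin n) (Fin n) ℂ := fun t => (1 + t • x)⁻¹ with hKdef
  set p := x * v - v * x with hp
  -- the orbit curve is `v + 2t[x,v] + t² c(t)`, with `c` continuous at `0`
  let c : ℝ → Matrix (Fin n) (Fin n) ℂ := fun t =>
    (2 : ℝ) • (x * x * J t * v * (2 * K t - 1)) + (2 : ℝ) • ((1 + (2 * t) • x) * v * (x * x * K t))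
      - (4 : ℝ) • (x * v * x)
  have hc : ContinuousAt c 0 := by
    fun_prop
  have hw : ∀ t : ℝ, IsUnit (1 - t • x).det →
      (2 * J t - 1) * v * (2 * J t - 1)⁻¹ = v + t • ((2 : ℝ) • p) + t ^ 2 • c t := by
    intro t ht
    obtain ⟨-, -, h3, h4, h5⟩ := cayley_properties (t • x) (by rw [Matrix.transpose_smul, hx, smul_neg]) ht
    have h4' : J t = 1 + t • x + t ^ 2 • (x * x * J t) := by
      simpa [smul_smul, pow_two] using h4
    have h5' : K t = 1 - t • x + t ^ 2 • (x * x * K t) := by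
      simpa [smul_smul, pow_two] using h5
    have hG : 2 * J t - 1 = 1 + (2 * t) • x + (2 * t ^ 2) • (x * x * J t) := by
      calc 2 * J t - 1 = 2 * (1 + t • x + t ^ 2 • (x * x * J t)) - 1 := by rw [← h4']
        _ = _ := by rw [two_mul]; module
    have hG' : 2 * K t - 1 = 1 - (2 * t) • x + (2 * t ^ 2) • (x * x * K t) := by
      calc 2 * K t - 1 = 2 * (1 - t • x + t ^ 2 • (x * x * K t)) - 1 := by rw [← h5']
        _ = _ := by rw [two_mul]; module
    have hB : (2 * J t - 1)⁻¹ = 2 * K t - 1 := h3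
    have hsplit : (1 + (2 * t) • x) * v * (2 * K t - 1) =
        v + (2 * t) • p - (4 * t ^ 2) • (x * v * x)
          + (2 * t ^ 2) • ((1 + (2 * t) • x) * v * (x * x * K t)) := by
      rw [hG', hp]
      simp only [mul_add, add_mul, mul_sub, smul_mul_assoc, mul_smul_comm, one_mul,
        mul_one, Matrix.mul_assoc]
      module
    calc (2 * J t - 1) * v * (2 * J t - 1)⁻¹
        = (1 + (2 * t) • x) * v * (2 * K t - 1)
          + (2 * t ^ 2) • (x * x * J t * v * (2 * K t - 1)) := by
          rw [hB, hG]
          simp only [add_mul, smul_mul_assoc]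
      _ = _ := by
          rw [hsplit]
          simp only [c]
          module
  let φ : ℝ → ℝ := fun t => 4 * hermForm R p p + 2 * hermForm R v (c t)
    + t * (4 * hermForm R p (c t)) + t ^ 2 * hermForm R (c t) (c t)
  have hφ : ContinuousAt φ 0 := by
    have hH : ∀ f g : ℝ → Matrix (Fin n) (Fin n) ℂ, ContinuousAt f 0 → ContinuousAt g 0 →
        ContinuousAt (fun t => hermForm R (f t) (g t)) 0 := fun f g hf hg =>
      ((continuous_hermForm R).continuousAt (x := (f 0, g 0))).comp (f := fun t => (f t, g t))
        (hf.prodMk hg)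
    have h1 := hH (fun _ => v) c continuousAt_const hc
    have h2 := hH (fun _ => p) c continuousAt_const hc
    have h3 := hH c c hc hc
    fun_prop
  have hfin := second_order_test φ hφ (4 * hermForm R v p) (by
    filter_upwards [hev] with t ht
    obtain ⟨h1, h2, -⟩ := cayley_properties (t • x) (by rw [Matrix.transpose_smul, hx, smul_neg]) ht
    have h3 := hmin _ h1 h2
    have h4 := hw t ht
    simp only [hJdef] at h4
    rw [h4] at h3
    simp only [hermForm_add_left, hermForm_add_right, hermForm_smul_left, hermForm_smul_right] at h3
    rw [hermForm_comm R p v hR, hermForm_comm R (c t) v hR, hermForm_comm R (c t) p hR] at h3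
    simp only [φ]
    nlinarith [h3])
  have hc0 : c 0 = (2 : ℝ) • (x * x * v + v * x * x - (2 : ℝ) • (x * v * x)) := by
    have hJ0 : J 0 = 1 := by simp [hJdef]
    have hK0 : K 0 = 1 := by simp [hKdef]
    have h21 : (2 : Matrix (Fin n) (Fin n) ℂ) - 1 = 1 := by norm_num
    simp only [c, hJ0, hK0, mul_one, mul_zero, zero_smul, add_zero, one_mul, h21]
    rw [← Matrix.mul_assoc v x x]
    module
  have hφ0 : φ 0 = 4 * (hermForm R p p
      + hermForm R v (x * x * v + v * x * x - (2 : ℝ) • (x * v * x))) := by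
    simp only [φ, hc0, hermForm_smul_right]; ring
  linarith

/-! ### Nonnegativity of `R` on the image of `ad_v` -/

section
variable (A B : soM n)

/-- The complex skew-symmetric matrix `A + iB`. -/
def toCx (A B : soM n) : Matrix (Fin n) (Fin n) ℂ :=
  A.1.map Complex.ofRealHom + Complex.I • B.1.map Complex.ofRealHom

theorem skewPart_coe : skewPart A.1 = A := by
  apply Subtype.ext
  have hA : A.1ᵀ = -A.1 := A.2
  simp only [skewPart, hA]
  module

theorem reSk_toCx : reSk (toCx A B) = A := by
  have : (toCx A B).map Complex.re = A.1 := by ext i j; simp [toCx]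
  rw [reSk, this, skewPart_coe]

theorem imSk_toCx : imSk (toCx A B) = B := by
  have : (toCx A B).map Complex.im = B.1 := by ext i j; simp [toCx]
  rw [imSk, this, skewPart_coe]

theorem toCx_transpose : (toCx A B)ᵀ = -toCx A B := by
  have hA : A.1ᵀ = -A.1 := A.2
  have hB : B.1ᵀ = -B.1 := B.2
  ext i j
  have h1 : A.1 j i = -A.1 i j := congrFun (congrFun hA i) j
  have h2 : B.1 j i = -B.1 i j := congrFun (congrFun hB i) j
  simp [toCx, h1, h2]
  ring

end

theorem toCx_reSk_imSk (v : Matrix (Fin n) (Fin n) ℂ) (hv : vᵀ = -v) :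
    toCx (reSk v) (imSk v) = v := by
  ext i j
  have h1 : v j i = -v i j := congrFun (congrFun hv i) j
  apply Complex.ext <;> simp [toCx, reSk, imSk, skewPart, h1] <;> ring

theorem toCx_commutator (x y a b : soM n) :
    toCx x y * toCx a b - toCx a b * toCx x y =
      toCx ((-1 : ℝ) • (adM a x - adM b y)) ((-1 : ℝ) • (adM a y + adM b x)) := by
  have hmap : ∀ P Q : Matrix (Fin n) (Fin n) ℝ,
      (P * Q).map Complex.ofRealHom = P.map Complex.ofRealHom * Q.map Complex.ofRealHom :=
    fun P Q => Matrix.map_mul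
  have hadd : ∀ P Q : Matrix (Fin n) (Fin n) ℝ,
      (P + Q).map Complex.ofRealHom = P.map Complex.ofRealHom + Q.map Complex.ofRealHom :=
    fun P Q => Matrix.map_add _ (map_add _) P Q
  have hsub : ∀ P Q : Matrix (Fin n) (Fin n) ℝ,
      (P - Q).map Complex.ofRealHom = P.map Complex.ofRealHom - Q.map Complex.ofRealHom :=
    fun P Q => Matrix.map_sub _ (map_sub _) P Q
  have hneg : ∀ P : Matrix (Fin n) (Fin n) ℝ,
      (-P).map Complex.ofRealHom = -P.map Complex.ofRealHom := by
    intro P; ext i j; simp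
  simp only [toCx, adM, LinearMap.coe_mk, AddHom.coe_mk, Submodule.coe_smul, Submodule.coe_sub,
    Submodule.coe_add, neg_one_smul, hneg, hadd, hsub, hmap]
  simp only [mul_add, add_mul, smul_mul_assoc, mul_smul_comm, smul_smul, Complex.I_mul_I,
    smul_add, smul_sub, smul_neg]
  module

/-- At a minimum `v` over the orbit, `R` is nonnegative on the image of `ad_v`: the second variations in
the directions `X` and `iX` add up to `2 R([X,v], conj [X,v])`. -/
theorem nonneg_on_range_ad (R : soM n →ₗ[ℝ] soM n) (hR : IsSA R) (v : Matrix (Fin n) (Fin n) ℂ)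
    (hv : vᵀ = -v)
    (hmin : ∀ g : Matrix (Fin n) (Fin n) ℂ, gᵀ * g = 1 → g.det = 1 →
      hermForm R v v ≤ hermForm R (g * v * g⁻¹) (g * v * g⁻¹)) (x y : soM n) :
    0 ≤ soInner (R (adM (reSk v) x - adM (imSk v) y)) (adM (reSk v) x - adM (imSk v) y)
      + soInner (R (adM (reSk v) y + adM (imSk v) x)) (adM (reSk v) y + adM (imSk v) x) := by
  set X := toCx x y with hX
  have hXt : Xᵀ = -X := toCx_transpose x y
  have h1 := second_variation R hR v hmin X hXt
  have h2 := second_variation R hR v hmin (Complex.I • X) (by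
    rw [Matrix.transpose_smul, hXt, smul_neg])
  have e1 : (Complex.I • X) * v - v * (Complex.I • X) = Complex.I • (X * v - v * X) := by
    simp only [smul_mul_assoc, mul_smul_comm, smul_sub]
  have e2 : (Complex.I • X) * (Complex.I • X) * v + v * (Complex.I • X) * (Complex.I • X)
      - (2 : ℝ) • ((Complex.I • X) * v * (Complex.I • X))
      = (-1 : ℝ) • (X * X * v + v * X * X - (2 : ℝ) • (X * v * X)) := by
    simp only [smul_mul_assoc, mul_smul_comm, smul_smul, Complex.I_mul_I]
    module
  rw [e1, e2, hermForm_I_smul, hermForm_smul_right] at h2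
  have h3 : 0 ≤ hermForm R (X * v - v * X) (X * v - v * X) := by linarith
  have h4 : X * v - v * X = X * toCx (reSk v) (imSk v) - toCx (reSk v) (imSk v) * X := by
    rw [toCx_reSk_imSk v hv]
  rw [h4, hX, toCx_commutator, hermForm, reSk_toCx, imSk_toCx] at h3
  simp only [map_smul R, soInner_smul_left, soInner_smul_right] at h3
  linarith

theorem sharpForm_comm (R : soM n →ₗ[ℝ] soM n) (x y : soM n) :
    sharpForm R x y = sharpForm R y x := by
  rw [sharpForm, sharpForm]
  congr 1
  exact LinearMap.trace_mul_comm ℝ (adM x ∘ₗ R) (adM y ∘ₗ R)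

theorem adM_smul (c : ℝ) (x : soM n) : adM (c • x) = c • adM x := by
  ext1 z
  apply Subtype.ext
  simp [adM, smul_sub]

theorem sharpForm_smul_right (R : soM n →ₗ[ℝ] soM n) (x y : soM n) (c : ℝ) :
    sharpForm R x (c • y) = c * sharpForm R x y := by
  rw [sharpForm, sharpForm, adM_smul, LinearMap.smul_comp, LinearMap.comp_smul,
    LinearMap.comp_smul, map_smul, smul_eq_mul]
  ring

open ComplexOrder in
/-- If `S ⊆ so(n,ℂ)` is `Ad_{SO(n,ℂ)}`-invariant, `R ∈ C(S,h)` and `v ∈ S`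
satisfies `R(v,v̄) = h`, then `(R∘R)(v,v̄) + R^#(v,v̄) ≥ 0`. -/
theorem sharp_nonneg_at_minimum (n : ℕ) (hn : 2 ≤ n)
    (S : Set (Matrix (Fin n) (Fin n) ℂ))
    (hSskew : ∀ v ∈ S, vᵀ = -v)
    (hSinv : ∀ g : Matrix (Fin n) (Fin n) ℂ, gᵀ * g = 1 → g.det = 1 →
      ∀ v ∈ S, g * v * g⁻¹ ∈ S)
    (h : ℝ) (R : soM n →ₗ[ℝ] soM n) (hR : R ∈ CSet S h)
    (v : Matrix (Fin n) (Fin n) ℂ) (hv : v ∈ S)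
    (heq : qC R v (conjM v) = (h : ℂ)) :
    (0 : ℂ) ≤ qC (R ∘ₗ R) v (conjM v) + bilinC (sharpForm R) v (conjM v) := by
  obtain ⟨hSA, hge⟩ := hR
  have hSA2 : IsSA (R ∘ₗ R) := fun A B => by
    rw [LinearMap.comp_apply, LinearMap.comp_apply, hSA, hSA]
  rw [qC_conjM R v hSA, Complex.ofReal_inj] at heq
  have hmin : ∀ g : Matrix (Fin n) (Fin n) ℂ, gᵀ * g = 1 → g.det = 1 →
      hermForm R v v ≤ hermForm R (g * v * g⁻¹) (g * v * g⁻¹) := by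
    intro g hg hg'
    have h1 := hge _ (hSinv g hg hg' v hv)
    rw [qC_conjM R _ hSA, Complex.real_le_real] at h1
    rwa [heq]
  have hsharp := sharpForm_add_nonneg R hSA (reSk v) (imSk v)
    (nonneg_on_range_ad R hSA v (hSskew v hv) hmin)
  have hsq : 0 ≤ hermForm (R ∘ₗ R) v v := by
    rw [hermForm, LinearMap.comp_apply, LinearMap.comp_apply, hSA, hSA (R (imSk v))]
    exact add_nonneg (soInner_self_nonneg _) (soInner_self_nonneg _)
  rw [qC_conjM _ v hSA2, bilinC_conjM v _ (sharpForm_comm R) (sharpForm_smul_right R),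
    ← Complex.ofReal_add, Complex.zero_le_real]
  exact add_nonneg hsq hsharp

end
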